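/- Let K be a field, n ≥ 1, and let R = R(K[X_1, ..., X_n]) be the reciprocal complement of the polynomial ring in n variables. Then R is a local ring, and its unique maximal ideal is generated (as an ideal of R) by the set of all elements of the form 1/f, where f ∈ K[X_1, ..., X_n] is a nonconstant polynomial. -/

import Mathlib

/-!
Write `D = K[X₁, …, Xₙ]`, let `R` be its reciprocal complement, and let `M` be a maximal ideal
of `R`.  The nonzero `f ∈ D` with `1/f ∉ M`, together with `0`, form a subring `D₀` of `D`
(`nonvanishingSubring`); closure under addition comes from
`1/(f+g) * (1/f + 1/g) = 1/f * 1/g` and the primality of `M`.  All other reciprocals lie in `M`,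
so every element of `R` is congruent modulo `M` to a fraction `p/q` with `p, q ∈ D₀`
(`exists_fraction_sub_mem`), and such a fraction lies in `M` only if it is zero
(`eq_zero_of_fraction_mem`).

If `g ∈ D₀` is nonzero, then `1/g` has an inverse modulo the maximal ideal `M`, which may be taken
to be a fraction `s` of elements of `D₀`.  Then `s/g - 1` is a fraction of elements of `D₀` lying
in `M`, hence zero, so `g = s ∈ R` (`algebraMap_mem_of_recip_notMem`).  Every element of `R` is a
fraction whose numerator has degree at most that of its denominator, so `g` is constant
(`mem_range_C_of_algebraMap_mem`).  Thus `M` contains `1/f` for all nonconstant `f`.  Modulo the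
ideal generated by these, every element of `R` is a constant, and no nonzero constant lies in `M`;
so `M` equals that ideal.  As this determines `M`, the ring `R` is local.
-/

/-- The reciprocal complement `R(T)` of an integral domain `T` with fraction field `F`:
the subring of `F` generated by the reciprocals of the nonzero elements of `T`. -/
def ReciprocalComplement (T F : Type*) [CommRing T] [Field F] [Algebra T F] : Subring F :=
  Subring.closure {x : F | ∃ f : T, f ≠ 0 ∧ x = (algebraMap T F f)⁻¹}

namespace ReciprocalComplement

section General

variable {D F : Type*} [CommRing D] [Field F] [Algebra D F]

variable (F) in
/-- The reciprocal `1/f`, as an element of the reciprocal complement, with `1/0 = 0`. -/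
noncomputable def recip (f : D) : ReciprocalComplement D F :=
  ⟨(algebraMap D F f)⁻¹, by
    by_cases hf : f = 0
    · simp [hf, (ReciprocalComplement D F).zero_mem]
    · exact Subring.subset_closure ⟨f, hf, rfl⟩⟩

@[simp] lemma coe_recip (f : D) : (recip F f : F) = (algebraMap D F f)⁻¹ := rfl

@[simp] lemma recip_one : recip F (1 : D) = 1 := Subtype.ext (by simp)

lemma recip_mul (f g : D) : recip F (f * g) = recip F f * recip F g :=
  Subtype.ext (by simp [mul_comm])

lemma recip_neg (f : D) : recip F (-f) = -recip F f :=
  Subtype.ext (by simp [inv_neg])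

lemma algebraMap_ne_zero [IsFractionRing D F] {f : D} (hf : f ≠ 0) : algebraMap D F f ≠ 0 := by
  simpa using hf

lemma recip_add_mul [IsFractionRing D F] {f g : D} (hf : f ≠ 0) (hg : g ≠ 0) (hfg : f + g ≠ 0) :
    recip F (f + g) * (recip F f + recip F g) = recip F f * recip F g := by
  have h₁ := algebraMap_ne_zero (F := F) hf
  have h₂ := algebraMap_ne_zero (F := F) hg
  have h₃ := algebraMap_ne_zero (F := F) hfg
  rw [map_add] at h₃
  apply Subtype.ext
  simp only [Subring.coe_mul, Subring.coe_add, coe_recip, map_add]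
  field_simp
  ring

/-- The elements of `D` whose reciprocal lies outside the prime ideal `M`, together with `0`. -/
def nonvanishingSubring [IsFractionRing D F] (M : Ideal (ReciprocalComplement D F))
    [hM : M.IsPrime] : Subring D where
  carrier := {f | f ≠ 0 → recip F f ∉ M}
  zero_mem' := fun h => absurd rfl h
  one_mem' := fun _ => by
    rw [recip_one]
    exact fun h => hM.ne_top ((Ideal.eq_top_iff_one M).2 h)
  mul_mem' := by
    intro f g hf hg hfg h
    rw [recip_mul] at h
    exact (hM.mem_or_mem h).elim (hf (left_ne_zero_of_mul hfg)) (hg (right_ne_zero_of_mul hfg))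
  neg_mem' := by
    intro f hf hf' h
    rw [recip_neg, neg_mem_iff] at h
    exact hf (neg_ne_zero.1 hf') h
  add_mem' := by
    intro f g hf hg hfg h
    by_cases hf0 : f = 0
    · subst hf0
      rw [zero_add] at h hfg
      exact hg hfg h
    by_cases hg0 : g = 0
    · subst hg0
      rw [add_zero] at h hfg
      exact hf hfg h
    have := M.mul_mem_right (recip F f + recip F g) h
    rw [recip_add_mul hf0 hg0 hfg] at this
    exact (hM.mem_or_mem this).elim (hf hf0) (hg hg0)

/-- If the reciprocal of every element outside the subring `A` lies in the ideal `I`, then modulo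
`I` every element of the reciprocal complement is a fraction of elements of `A`. -/
lemma exists_fraction_sub_mem [IsFractionRing D F] (I : Ideal (ReciprocalComplement D F))
    (A : Subring D) (hA : ∀ f, f ∉ A → recip F f ∈ I) (x : ReciprocalComplement D F) :
    ∃ s : ReciprocalComplement D F, x - s ∈ I ∧
      ∃ p ∈ A, ∃ q ∈ A, q ≠ 0 ∧ (s : F) = algebraMap D F p / algebraMap D F q := by
  have : IsDomain D := (IsFractionRing.injective D F).isDomain (algebraMap D F)
  obtain ⟨x, hx⟩ := x
  induction hx using Subring.closure_induction with
  | mem x hx =>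
    obtain ⟨f, hf, rfl⟩ := hx
    by_cases hfA : f ∈ A
    · exact ⟨recip F f, by simp [recip], 1, A.one_mem, f, hfA, hf, by simp⟩
    · refine ⟨0, ?_, 0, A.zero_mem, 1, A.one_mem, one_ne_zero, by simp⟩
      rw [sub_zero]
      exact hA f hfA
  | zero =>
    refine ⟨0, ?_, 0, A.zero_mem, 1, A.one_mem, one_ne_zero, by simp⟩
    rw [sub_zero]
    exact I.zero_mem
  | one =>
    refine ⟨1, ?_, 1, A.one_mem, 1, A.one_mem, one_ne_zero, by simp⟩
    convert I.zero_mem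
    exact sub_self (1 : ReciprocalComplement D F)
  | add x y hx hy ihx ihy =>
    obtain ⟨s, hs, p, hp, q, hq, hq0, hspq⟩ := ihx
    obtain ⟨t, ht, a, ha, b, hb, hb0, htab⟩ := ihy
    refine ⟨s + t, ?_, p * b + q * a, A.add_mem (A.mul_mem hp hb) (A.mul_mem hq ha), q * b,
      A.mul_mem hq hb, mul_ne_zero hq0 hb0, ?_⟩
    · convert I.add_mem hs ht using 1
      exact Subtype.ext (add_sub_add_comm _ _ _ _)
    · rw [Subring.coe_add, hspq, htab, div_add_div _ _ (algebraMap_ne_zero hq0)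
        (algebraMap_ne_zero hb0)]
      simp
  | neg x hx ihx =>
    obtain ⟨s, hs, p, hp, q, hq, hq0, hspq⟩ := ihx
    refine ⟨-s, ?_, -p, A.neg_mem hp, q, hq, hq0, ?_⟩
    · convert I.neg_mem hs using 1
      exact Subtype.ext (neg_sub' _ _).symm
    · rw [Subring.coe_neg, hspq, map_neg, neg_div]
  | mul x y hx hy ihx ihy =>
    obtain ⟨s, hs, p, hp, q, hq, hq0, hspq⟩ := ihx
    obtain ⟨t, ht, a, ha, b, hb, hb0, htab⟩ := ihy
    refine ⟨s * t, ?_, p * a, A.mul_mem hp ha, q * b,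
      A.mul_mem hq hb, mul_ne_zero hq0 hb0, ?_⟩
    · convert I.add_mem (I.mul_mem_left ⟨x, hx⟩ ht) (I.mul_mem_right t hs) using 1
      apply Subtype.ext
      simp only [AddSubgroupClass.coe_sub, Subring.coe_add, Subring.coe_mul]
      ring
    · rw [Subring.coe_mul, hspq, htab, div_mul_div_comm, map_mul, map_mul]

lemma eq_zero_of_fraction_mem [IsFractionRing D F] (M : Ideal (ReciprocalComplement D F))
    [M.IsPrime] {p q : D} (hq : q ∈ nonvanishingSubring M) (hq0 : q ≠ 0)
    {s : ReciprocalComplement D F} (hs : s ∈ M)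
    (hspq : (s : F) = algebraMap D F p / algebraMap D F q) : p = 0 := by
  by_contra hp0
  apply hq hq0
  convert M.mul_mem_left (recip F p) hs using 1
  apply Subtype.ext
  have := algebraMap_ne_zero (F := F) hp0
  rw [Subring.coe_mul, hspq, coe_recip, coe_recip]
  field_simp

/-- A maximal ideal `M` can only avoid `1/g` if `g` itself lies in the reciprocal complement,
because the inverse of `1/g` modulo `M` lifts to a fraction that must equal `g`. -/
lemma algebraMap_mem_of_recip_notMem [IsFractionRing D F]
    (M : Ideal (ReciprocalComplement D F)) [hM : M.IsMaximal] {g : D} (hg : recip F g ∉ M) :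
    algebraMap D F g ∈ ReciprocalComplement D F := by
  have : IsDomain D := (IsFractionRing.injective D F).isDomain (algebraMap D F)
  have hg0 : g ≠ 0 := by
    rintro rfl
    exact hg (by convert M.zero_mem; exact Subtype.ext (by simp))
  obtain ⟨r, i, hi, hri⟩ := hM.exists_inv hg
  obtain ⟨s, hs, p, hp, q, hq, hq0, hspq⟩ :=
    exists_fraction_sub_mem M (nonvanishingSubring M)
      (fun f hf => by_contra fun h => hf fun _ => h) r
  have hgA : g ∈ nonvanishingSubring M := fun _ => hg
  have hmem : s * recip F g - 1 ∈ M := by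
    have h : s * recip F g - 1 = -((r - s) * recip F g + i) := by rw [← hri]; ring
    rw [h]
    exact M.neg_mem (M.add_mem (M.mul_mem_right _ hs) hi)
  have h₁ := algebraMap_ne_zero (F := F) hg0
  have h₂ := algebraMap_ne_zero (F := F) hq0
  have hpq : p - q * g = 0 := by
    refine eq_zero_of_fraction_mem M (Subring.mul_mem _ hq hgA) (mul_ne_zero hq0 hg0) hmem ?_
    simp only [AddSubgroupClass.coe_sub, Subring.coe_mul, Subring.coe_one, coe_recip, hspq, map_sub, map_mul]
    field_simp
  have hsg : (s : F) = algebraMap D F g := by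
    rw [hspq, sub_eq_zero.1 hpq, map_mul, mul_div_cancel_left₀ _ h₂]
  exact hsg ▸ s.2

end General

section Polynomial

open MvPolynomial

variable {K σ F : Type*} [Field K] [Field F] [Algebra (MvPolynomial σ K) F]

/-- Elements of the reciprocal complement have nonpositive degree. -/
lemma exists_totalDegree_le [IsFractionRing (MvPolynomial σ K) F] {x : F}
    (hx : x ∈ ReciprocalComplement (MvPolynomial σ K) F) :
    ∃ p q : MvPolynomial σ K, q ≠ 0 ∧ p.totalDegree ≤ q.totalDegree ∧
      x = algebraMap _ F p / algebraMap _ F q := by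
  induction hx using Subring.closure_induction with
  | mem x hx =>
    obtain ⟨f, hf, rfl⟩ := hx
    exact ⟨1, f, hf, by simp, by simp⟩
  | zero => exact ⟨0, 1, one_ne_zero, by simp, by simp⟩
  | one => exact ⟨1, 1, one_ne_zero, by simp, by simp⟩
  | add x y hx hy ihx ihy =>
    obtain ⟨p, q, hq, hd, rfl⟩ := ihx
    obtain ⟨a, b, hb, he, rfl⟩ := ihy
    refine ⟨p * b + q * a, q * b, mul_ne_zero hq hb, ?_, ?_⟩
    · rw [totalDegree_mul_of_isDomain hq hb]
      have h₁ := totalDegree_mul p b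
      have h₂ := totalDegree_mul q a
      exact (totalDegree_add _ _).trans (max_le (by omega) (by omega))
    · rw [div_add_div _ _ (algebraMap_ne_zero hq) (algebraMap_ne_zero hb)]
      simp
  | neg x hx ihx =>
    obtain ⟨p, q, hq, hd, rfl⟩ := ihx
    exact ⟨-p, q, hq, by simpa using hd, by rw [map_neg, neg_div]⟩
  | mul x y hx hy ihx ihy =>
    obtain ⟨p, q, hq, hd, rfl⟩ := ihx
    obtain ⟨a, b, hb, he, rfl⟩ := ihy
    refine ⟨p * a, q * b, mul_ne_zero hq hb, ?_, ?_⟩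
    · rw [totalDegree_mul_of_isDomain hq hb]
      exact (totalDegree_mul p a).trans (add_le_add hd he)
    · rw [div_mul_div_comm, map_mul, map_mul]

lemma mem_range_C_of_algebraMap_mem [IsFractionRing (MvPolynomial σ K) F] {g : MvPolynomial σ K}
    (hg : algebraMap _ F g ∈ ReciprocalComplement (MvPolynomial σ K) F) :
    g ∈ Set.range (C (σ := σ) (R := K)) := by
  by_cases hg0 : g = 0
  · exact ⟨0, by simp [hg0]⟩
  obtain ⟨p, q, hq, hd, h⟩ := exists_totalDegree_le hg
  rw [eq_div_iff (algebraMap_ne_zero hq), ← map_mul] at h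
  rw [← IsFractionRing.injective _ F h, totalDegree_mul_of_isDomain hg0 hq] at hd
  exact ⟨_, (totalDegree_eq_zero_iff_eq_C.1 (by omega)).symm⟩

lemma recip_mem_of_isMaximal [IsFractionRing (MvPolynomial σ K) F]
    (M : Ideal (ReciprocalComplement (MvPolynomial σ K) F)) [M.IsMaximal]
    {f : MvPolynomial σ K} (hf : f ∉ Set.range (C (σ := σ) (R := K))) : recip F f ∈ M :=
  by_contra fun h => hf (mem_range_C_of_algebraMap_mem (algebraMap_mem_of_recip_notMem M h))

lemma C_mem_nonvanishingSubring [IsFractionRing (MvPolynomial σ K) F]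
    (M : Ideal (ReciprocalComplement (MvPolynomial σ K) F)) [hM : M.IsPrime] (a : K) :
    (C a : MvPolynomial σ K) ∈ nonvanishingSubring M := by
  intro ha h
  have ha0 : a ≠ 0 := by rintro rfl; simp at ha
  apply hM.ne_top
  rw [Ideal.eq_top_iff_one, ← recip_one (F := F) (D := MvPolynomial σ K), ← C_1,
    ← inv_mul_cancel₀ ha0, C_mul, recip_mul]
  exact M.mul_mem_left _ h

variable (K σ F) in
/-- The ideal generated by the reciprocals of the nonconstant polynomials. -/
noncomputable def nonconstantIdeal : Ideal (ReciprocalComplement (MvPolynomial σ K) F) :=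
  Ideal.span {y | ∃ f : MvPolynomial σ K, f ∉ Set.range (C (σ := σ) (R := K)) ∧
    (y : F) = (algebraMap (MvPolynomial σ K) F f)⁻¹}

lemma eq_nonconstantIdeal [IsFractionRing (MvPolynomial σ K) F]
    (M : Ideal (ReciprocalComplement (MvPolynomial σ K) F)) [hM : M.IsMaximal] :
    M = nonconstantIdeal K σ F := by
  have hle : nonconstantIdeal K σ F ≤ M := by
    refine Ideal.span_le.2 ?_
    rintro y ⟨f, hf, hy⟩
    rw [show y = recip F f from Subtype.ext hy]
    exact recip_mem_of_isMaximal M hf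
  refine le_antisymm (fun x hx => ?_) hle
  -- Modulo the span, `x` is a fraction of constants, which vanishes because it lies in `M`.
  obtain ⟨s, hs, p, ⟨a, rfl⟩, q, ⟨b, rfl⟩, hb, hsab⟩ :=
    exists_fraction_sub_mem (nonconstantIdeal K σ F) (C (σ := σ) (R := K)).range
      (fun f hf => Ideal.subset_span ⟨f, hf, rfl⟩) x
  have hsM : s ∈ M := by simpa using M.sub_mem hx (hle hs)
  have ha := eq_zero_of_fraction_mem M (C_mem_nonvanishingSubring M b) hb hsM hsab
  have hs0 : s = 0 := Subtype.ext (by rw [hsab, ha]; simp)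
  rwa [hs0, sub_zero] at hs

end Polynomial

end ReciprocalComplement

/-- The reciprocal complement `R` of the polynomial ring `K[X₁, …, Xₙ]` (`n ≥ 1`) is a
local ring, whose unique maximal ideal is generated by the elements `1/f` with `f` a
nonconstant polynomial. -/
theorem recip_polynomialRing_isLocalRing (K : Type*) [Field K] (n : ℕ) (hn : 1 ≤ n)
    (F : Type*) [Field F] [Algebra (MvPolynomial (Fin n) K) F]
    [IsFractionRing (MvPolynomial (Fin n) K) F] :
    IsLocalRing (ReciprocalComplement (MvPolynomial (Fin n) K) F) ∧
      ∀ M : Ideal (ReciprocalComplement (MvPolynomial (Fin n) K) F), M.IsMaximal →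
        M = Ideal.span {y : ReciprocalComplement (MvPolynomial (Fin n) K) F |
          ∃ f : MvPolynomial (Fin n) K, f ∉ Set.range (MvPolynomial.C (σ := Fin n) (R := K)) ∧
            (y : F) = (algebraMap (MvPolynomial (Fin n) K) F f)⁻¹} := by
  have hloc : IsLocalRing (ReciprocalComplement (MvPolynomial (Fin n) K) F) := by
    obtain ⟨M, hM⟩ := Ideal.exists_maximal (ReciprocalComplement (MvPolynomial (Fin n) K) F)
    refine IsLocalRing.of_unique_max_ideal ⟨M, hM, fun N hN => ?_⟩
    have : N.IsMaximal := hN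
    rw [ReciprocalComplement.eq_nonconstantIdeal M, ReciprocalComplement.eq_nonconstantIdeal N]
  exact ⟨hloc, fun M _ => ReciprocalComplement.eq_nonconstantIdeal M⟩
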